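/- arXiv:2201.04611 — 7 statements merged into one kernel-verified Lean document; each statement's English description precedes it below -/
import Mathlib

section
/- Aiming inequality (Lemma 4.2 of the paper): Assume (A1) sharpness and (A2) (b)-regularity hold. Then for every x ∈ E with ‖x − x̄‖ < δ and dist(x, X*) ≤ (μ/(2·C_b))^(1/η), every v ∈ g(x), and every x̂ ∈ P_{X*}(x), one has ⟨v, x − x̂⟩ ≥ (μ/2)·dist(x, X*). In particular, if additionally x ∉ X*, then ‖v‖ ≥ μ/2 for every v ∈ g(x). -/
open Metric
open scoped RealInnerProductSpace

/-- **Aiming inequality** (Lemma 4.2): under sharpness (A1) and (b)-regularity (A2),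
negative generalized gradients aim at the solution set. -/
theorem aiming_inequality {d : ℕ}
    (f : EuclideanSpace ℝ (Fin d) → ℝ) (Xs : Set (EuclideanSpace ℝ (Fin d)))
    (fstar : ℝ) (hXne : Xs.Nonempty) (hXcl : IsClosed Xs)
    (hfX : ∀ y ∈ Xs, f y = fstar)
    (xbar : EuclideanSpace ℝ (Fin d)) (hxbar : xbar ∈ Xs) (δ : ℝ) (hδ : 0 < δ)
    (μ : ℝ) (hμ : 0 < μ)
    (hsharp : ∀ x ∈ ball xbar δ, f x - fstar ≥ μ * infDist x Xs)
    (g : EuclideanSpace ℝ (Fin d) → Set (EuclideanSpace ℝ (Fin d)))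
    (hg : ∀ x, (g x).Nonempty)
    (C_b η : ℝ) (hC : 0 < C_b) (hη : 0 < η)
    (hbreg : ∀ x ∈ ball xbar δ, ∀ v ∈ g x, ∀ y ∈ Xs ∩ ball xbar (2 * δ),
      |f x + ⟪v, y - x⟫ - fstar| ≤ C_b * ‖y - x‖ ^ (1 + η))
    (x : EuclideanSpace ℝ (Fin d))
    (hx1 : ‖x - xbar‖ < δ)
    (hx2 : infDist x Xs ≤ (μ / (2 * C_b)) ^ (1 / η)) :
    (∀ v ∈ g x, ∀ xh ∈ Xs, dist x xh = infDist x Xs →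
      ⟪v, x - xh⟫ ≥ μ / 2 * infDist x Xs) ∧
    (x ∉ Xs → ∀ v ∈ g x, ‖v‖ ≥ μ / 2) := by
  have hD : 0 ≤ infDist x Xs := infDist_nonneg
  have hxb : x ∈ ball xbar δ := by rwa [mem_ball, dist_eq_norm]
  have hpow : infDist x Xs ^ η ≤ μ / (2 * C_b) := by
    have h := Real.rpow_le_rpow hD hx2 hη.le
    rwa [← Real.rpow_mul (by positivity), one_div, inv_mul_cancel₀ hη.ne', Real.rpow_one] at h
  have key : ∀ v ∈ g x, ∀ xh ∈ Xs, dist x xh = infDist x Xs →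
      ⟪v, x - xh⟫ ≥ μ / 2 * infDist x Xs := by
    intro v hv xh hxh hd
    have hle : infDist x Xs ≤ dist x xbar := infDist_le_dist_of_mem hxbar
    have hxb' : dist x xbar < δ := hxb
    have hball : xh ∈ ball xbar (2 * δ) := by
      rw [mem_ball]
      have := dist_triangle xh x xbar
      rw [dist_comm xh x] at this
      linarith
    have hb := hbreg x hxb v hv xh ⟨hxh, hball⟩
    have hn : ‖xh - x‖ = infDist x Xs := by rw [← hd, dist_comm, dist_eq_norm]
    rw [hn, Real.rpow_add_of_nonneg hD zero_le_one hη.le, Real.rpow_one] at hb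
    have h1 : C_b * (infDist x Xs * infDist x Xs ^ η) ≤ μ / 2 * infDist x Xs := by
      calc C_b * (infDist x Xs * infDist x Xs ^ η)
          ≤ C_b * (infDist x Xs * (μ / (2 * C_b))) := by gcongr
        _ = μ / 2 * infDist x Xs := by field_simp
    have h2 := (abs_le.mp hb).2
    have h3 := hsharp x hxb
    have h4 : ⟪v, xh - x⟫ = - ⟪v, x - xh⟫ := by rw [← inner_neg_right, neg_sub]
    rw [h4] at h2
    linarith
  refine ⟨key, fun hx v hv => ?_⟩
  obtain ⟨xh, hxh, hd⟩ := hXcl.exists_infDist_eq_dist hXne x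
  have hpos : 0 < infDist x Xs := (hXcl.notMem_iff_infDist_pos hXne).mp hx
  have h1 := key v hv xh hxh hd.symm
  have h2 := real_inner_le_norm v (x - xh)
  rw [← dist_eq_norm, ← hd] at h2
  exact le_of_mul_le_mul_right (h1.le.trans h2) hpos
end

section
/- Iterating an algorithmic mapping (Lemma 4.4 of the paper): Fix a point x ∈ E with ‖x − x̄‖ < (1 − ρ)·φ₁/2 and dist(x, X*) < φ₂. Define the sequence z by z_0 = x and z_{i+1} = 𝒜(z_i). Then for every i ≥ 0 one has ‖z_i − x̄‖ < φ₁ and dist(z_i, X*) ≤ ρ^i·dist(x, X*); moreover, for every i ≥ 1 and every ẑ ∈ P_{X*}(z_{i−1}) one has dist(z_i, X*) ≤ ‖z_i − ẑ‖ ≤ ρ^i·dist(x, X*). -/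
open Metric

/-- **Iterating an algorithmic mapping** (Lemma 4.4): iterating an algorithmic mapping
from a suitable initialization keeps the iterates near `xbar` and drives them to `Xs`
at a linear rate. -/
theorem iterate_algorithmic_mapping {d : ℕ}
    (Xs : Set (EuclideanSpace ℝ (Fin d))) (hXne : Xs.Nonempty) (hXcl : IsClosed Xs)
    (xbar : EuclideanSpace ℝ (Fin d)) (hxbar : xbar ∈ Xs)
    (Alg : EuclideanSpace ℝ (Fin d) → EuclideanSpace ℝ (Fin d))
    (φ₁ φ₂ ρ : ℝ) (hφ₂ : 0 < φ₂) (hφ : φ₂ ≤ φ₁) (hρ0 : 0 < ρ) (hρ1 : ρ < 1)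
    (hAlg : ∀ x, ‖x - xbar‖ < φ₁ → infDist x Xs < φ₂ →
      ∀ xh ∈ Xs, dist x xh = infDist x Xs → ‖Alg x - xh‖ ≤ ρ * infDist x Xs)
    (x : EuclideanSpace ℝ (Fin d))
    (hx1 : ‖x - xbar‖ < (1 - ρ) * φ₁ / 2) (hx2 : infDist x Xs < φ₂)
    (z : ℕ → EuclideanSpace ℝ (Fin d)) (hz0 : z 0 = x)
    (hz : ∀ i, z (i + 1) = Alg (z i)) :
    (∀ i, ‖z i - xbar‖ < φ₁ ∧ infDist (z i) Xs ≤ ρ ^ i * infDist x Xs) ∧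
    (∀ i, 1 ≤ i → ∀ zh ∈ Xs, dist (z (i - 1)) zh = infDist (z (i - 1)) Xs →
      infDist (z i) Xs ≤ ‖z i - zh‖ ∧ ‖z i - zh‖ ≤ ρ ^ i * infDist x Xs) := by
  have hD0 : 0 ≤ infDist x Xs := infDist_nonneg
  have hDr : infDist x Xs ≤ ‖x - xbar‖ := by
    rw [← dist_eq_norm]; exact infDist_le_dist_of_mem hxbar
  have hr : 0 < 1 - ρ := by linarith
  have hpow : ∀ i : ℕ, ρ ^ i * infDist x Xs ≤ infDist x Xs := fun i =>
    mul_le_of_le_one_left hD0 (pow_le_one₀ hρ0.le hρ1.le)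
  have hball : ∀ i, (1 - ρ) * ‖z i - xbar‖ ≤
      (1 - ρ) * ‖x - xbar‖ + (1 + ρ) * (1 - ρ ^ i) * infDist x Xs →
      ‖z i - xbar‖ < φ₁ := by
    intro i h
    have hp : 0 ≤ (1 + ρ) * (ρ ^ i * infDist x Xs) := by positivity
    have h2 : (1 + ρ) * infDist x Xs ≤ (1 + ρ) * ‖x - xbar‖ :=
      mul_le_mul_of_nonneg_left hDr (by linarith)
    have h3 : (1 - ρ) * ‖z i - xbar‖ < (1 - ρ) * φ₁ := by linarith
    exact lt_of_mul_lt_mul_left h3 hr.le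
  -- one step of the iteration
  have hstep : ∀ i, ‖z i - xbar‖ < φ₁ → infDist (z i) Xs ≤ ρ ^ i * infDist x Xs →
      ∀ zh ∈ Xs, dist (z i) zh = infDist (z i) Xs →
      infDist (z (i + 1)) Xs ≤ ‖z (i + 1) - zh‖ ∧
        ‖z (i + 1) - zh‖ ≤ ρ ^ (i + 1) * infDist x Xs := by
    intro i h1 h2 zh hzh hd
    refine ⟨?_, ?_⟩
    · rw [← dist_eq_norm]; exact infDist_le_dist_of_mem hzh
    · have h3 := hAlg (z i) h1 (lt_of_le_of_lt (h2.trans (hpow i)) hx2) zh hzh hd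
      rw [hz i]
      have h4 := mul_le_mul_of_nonneg_left h2 hρ0.le
      rw [pow_succ]
      linarith
  have main : ∀ i, (1 - ρ) * ‖z i - xbar‖ ≤
      (1 - ρ) * ‖x - xbar‖ + (1 + ρ) * (1 - ρ ^ i) * infDist x Xs ∧
      infDist (z i) Xs ≤ ρ ^ i * infDist x Xs := by
    intro i
    induction i with
    | zero => simp [hz0]
    | succ i ih =>
      obtain ⟨ih1, ih2⟩ := ih
      obtain ⟨zh, hzh, hd⟩ := hXcl.exists_infDist_eq_dist hXne (z i)
      obtain ⟨h1, h2⟩ := hstep i (hball i ih1) ih2 zh hzh hd.symm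
      refine ⟨?_, h1.trans h2⟩
      have t1 : ‖z (i + 1) - xbar‖ ≤ ‖z (i + 1) - zh‖ + ‖z i - zh‖ + ‖z i - xbar‖ := by
        rw [← dist_eq_norm, ← dist_eq_norm, ← dist_eq_norm, ← dist_eq_norm, dist_comm (z i) zh]
        exact dist_triangle4 _ _ _ _
      have t2 : ‖z i - zh‖ ≤ ρ ^ i * infDist x Xs := by
        rw [← dist_eq_norm, ← hd]; exact ih2
      have t3 : ‖z (i + 1) - xbar‖ ≤
          ρ ^ (i + 1) * infDist x Xs + ρ ^ i * infDist x Xs + ‖z i - xbar‖ := by linarith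
      have t4 := mul_le_mul_of_nonneg_left t3 hr.le
      rw [pow_succ] at t4 ⊢
      linarith
  refine ⟨fun i => ⟨hball i (main i).1, (main i).2⟩, ?_⟩
  intro i hi zh hzh hd
  obtain ⟨j, rfl⟩ : ∃ j, i = j + 1 := ⟨i - 1, by omega⟩
  rw [Nat.add_sub_cancel] at hd
  exact hstep j (hball j (main j).1) (main j).2 zh hzh hd
end

section
/- One-step improvement of the Polyak subgradient step (Lemma 4.5 of the paper): Assume (A1) and (A2) hold and let s : E → E be a selection with s(x) ∈ g(x) for all x. Define 𝒜(x) = x − ((f(x) − f*)/‖s(x)‖²)·s(x) if s(x) ≠ 0, and 𝒜(x) = x otherwise. Then for every x ∈ E with ‖x − x̄‖ < δ and dist(x, X*) < (μ/(4·C_b))^(1/η), and every x̂ ∈ P_{X*}(x), one has ‖𝒜(x) − x̂‖² ≤ (1 − μ²/(4L²))·‖x − x̂‖². Consequently 𝒜 satisfies the algorithmic-mapping property (A3) with φ₁ = δ, φ₂ = (μ/(4·C_b))^(1/η), and ρ = sqrt(1 − μ²/(4L²)). -/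
open Metric
open scoped RealInnerProductSpace

/-- **One-step improvement of the Polyak subgradient step** (Lemma 4.5): the Polyak
step contracts the distance to each nearest point of the solution set; consequently the
Polyak step map is an algorithmic mapping with parameters
`φ₁ = δ`, `φ₂ = (μ/(4 C_b))^(1/η)`, `ρ = sqrt (1 - μ²/(4 L²))`. -/
theorem polyak_one_step_improvement {d : ℕ}
    (f : EuclideanSpace ℝ (Fin d) → ℝ) (Xs : Set (EuclideanSpace ℝ (Fin d)))
    (fstar : ℝ) (hXne : Xs.Nonempty) (hXcl : IsClosed Xs)
    (hfX : ∀ y ∈ Xs, f y = fstar)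
    (xbar : EuclideanSpace ℝ (Fin d)) (hxbar : xbar ∈ Xs) (δ : ℝ) (hδ : 0 < δ)
    (μ : ℝ) (hμ : 0 < μ)
    (hsharp : ∀ x ∈ ball xbar δ, f x - fstar ≥ μ * infDist x Xs)
    (g : EuclideanSpace ℝ (Fin d) → Set (EuclideanSpace ℝ (Fin d)))
    (hg : ∀ x, (g x).Nonempty)
    (C_b η : ℝ) (hC : 0 < C_b) (hη : 0 < η)
    (hbreg : ∀ x ∈ ball xbar δ, ∀ v ∈ g x, ∀ y ∈ Xs ∩ ball xbar (2 * δ),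
      |f x + ⟪v, y - x⟫ - fstar| ≤ C_b * ‖y - x‖ ^ (1 + η))
    (L : ℝ) (hL : 0 < L)
    (hgL : ∀ x ∈ ball xbar δ, ∀ v ∈ g x, ‖v‖ ≤ L)
    (s : EuclideanSpace ℝ (Fin d) → EuclideanSpace ℝ (Fin d))
    (hs : ∀ x, s x ∈ g x)
    (Alg : EuclideanSpace ℝ (Fin d) → EuclideanSpace ℝ (Fin d))
    (hAlg : ∀ x, (s x ≠ 0 → Alg x = x - ((f x - fstar) / ‖s x‖ ^ 2) • s x) ∧
      (s x = 0 → Alg x = x)) :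
    (∀ x, ‖x - xbar‖ < δ → infDist x Xs < (μ / (4 * C_b)) ^ (1 / η) →
      ∀ xh ∈ Xs, dist x xh = infDist x Xs →
        ‖Alg x - xh‖ ^ 2 ≤ (1 - μ ^ 2 / (4 * L ^ 2)) * ‖x - xh‖ ^ 2) ∧
    (∀ x, ‖x - xbar‖ < δ → infDist x Xs < (μ / (4 * C_b)) ^ (1 / η) →
      ∀ xh ∈ Xs, dist x xh = infDist x Xs →
        ‖Alg x - xh‖ ≤ Real.sqrt (1 - μ ^ 2 / (4 * L ^ 2)) * infDist x Xs) := by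
  have main : ∀ x, ‖x - xbar‖ < δ → infDist x Xs < (μ / (4 * C_b)) ^ (1 / η) →
      ∀ xh ∈ Xs, dist x xh = infDist x Xs →
        ‖Alg x - xh‖ ^ 2 ≤ (1 - μ ^ 2 / (4 * L ^ 2)) * ‖x - xh‖ ^ 2 := by
    intro x hx hd xh hxh hp
    have hxb : x ∈ ball xbar δ := by rwa [mem_ball, dist_eq_norm]
    have hle : dist x xh ≤ dist x xbar := hp ▸ infDist_le_dist_of_mem hxbar
    have hxhb : xh ∈ ball xbar (2 * δ) := by
      rw [mem_ball] at hxb ⊢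
      have := dist_triangle xh x xbar
      rw [dist_comm xh x] at this
      linarith
    have hF := hsharp x hxb
    have hB := hbreg x hxb (s x) (hs x) xh ⟨hxh, hxhb⟩
    have hvL := hgL x hxb (s x) (hs x)
    rw [← hp] at hF hd
    rw [dist_eq_norm] at hF hd
    rw [norm_sub_rev xh x] at hB
    have hD0 : 0 ≤ ‖x - xh‖ := norm_nonneg _
    have hpow : C_b * ‖x - xh‖ ^ (1 + η) ≤ μ / 4 * ‖x - xh‖ := by
      have h1 : ‖x - xh‖ ^ η ≤ μ / (4 * C_b) := by
        calc ‖x - xh‖ ^ η ≤ ((μ / (4 * C_b)) ^ (1 / η)) ^ η :=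
              Real.rpow_le_rpow hD0 hd.le hη.le
          _ = μ / (4 * C_b) := by
              rw [← Real.rpow_mul (by positivity), one_div_mul_cancel hη.ne', Real.rpow_one]
      rw [Real.rpow_add' hD0 (by positivity), Real.rpow_one]
      calc C_b * (‖x - xh‖ * ‖x - xh‖ ^ η) ≤ C_b * (‖x - xh‖ * (μ / (4 * C_b))) := by gcongr
        _ = μ / 4 * ‖x - xh‖ := by field_simp
    have hinner : (⟪s x, xh - x⟫ : ℝ) = - ⟪s x, x - xh⟫ := by
      rw [← inner_neg_right, neg_sub]
    rw [hinner] at hB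
    have hB2 := (abs_le.mp (hB.trans hpow)).2
    by_cases hv : s x = 0
    · rw [(hAlg x).2 hv]
      rw [hv, inner_zero_left] at hB2
      have : ‖x - xh‖ = 0 := by
        have : μ * ‖x - xh‖ ≤ 0 := by linarith
        nlinarith
      rw [this]; simp
    · rw [(hAlg x).1 hv]
      have hvp : 0 < ‖s x‖ := norm_pos_iff.mpr hv
      have hexp : ‖x - ((f x - fstar) / ‖s x‖ ^ 2) • s x - xh‖ ^ 2
          = ‖x - xh‖ ^ 2 - (f x - fstar) * (2 * ⟪s x, x - xh⟫ - (f x - fstar)) / ‖s x‖ ^ 2 := by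
        rw [sub_right_comm, norm_sub_sq_real, inner_smul_right, norm_smul,
          real_inner_comm, mul_pow, Real.norm_eq_abs, sq_abs]
        field_simp
        ring
      rw [hexp]
      have hμD : 0 ≤ μ * ‖x - xh‖ := by positivity
      have hprod : (μ * ‖x - xh‖) * (μ * ‖x - xh‖ / 2)
          ≤ (f x - fstar) * (2 * ⟪s x, x - xh⟫ - (f x - fstar)) := by
        apply mul_le_mul hF _ (by positivity) (by linarith)
        linarith
      have h3 : μ ^ 2 / (4 * L ^ 2) * ‖x - xh‖ ^ 2
          ≤ (f x - fstar) * (2 * ⟪s x, x - xh⟫ - (f x - fstar)) / ‖s x‖ ^ 2 := by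
        calc μ ^ 2 / (4 * L ^ 2) * ‖x - xh‖ ^ 2
            = (μ * ‖x - xh‖) * (μ * ‖x - xh‖ / 4) / L ^ 2 := by field_simp
          _ ≤ (μ * ‖x - xh‖) * (μ * ‖x - xh‖ / 2) / ‖s x‖ ^ 2 := by
              gcongr
              norm_num
          _ ≤ _ := by gcongr
      linarith
  refine ⟨main, ?_⟩
  intro x hx hd xh hxh hp
  have h := Real.sqrt_le_sqrt (main x hx hd xh hxh hp)
  rw [Real.sqrt_mul' _ (sq_nonneg _), Real.sqrt_sq (norm_nonneg _),
    Real.sqrt_sq (norm_nonneg _), ← dist_eq_norm x xh, hp] at h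
  exact h
end

section
/- Function-gap halving for a fallback algorithm (Corollary 4.7 of the paper): Let 𝒜 be an algorithmic mapping with radii 0 < φ₂ ≤ φ₁ and factor ρ ∈ (0,1). Assume f(x) − f* ≥ μ·dist(x, X*) for all x ∈ B_{φ₁}(x̄) with μ > 0, that f is L-Lipschitz on the open ball B_{2φ₁}(x̄) with L ≥ μ, and set κ = L/μ. Fix x ∈ E with ‖x − x̄‖ < (1 − ρ)·φ₁/2, dist(x, X*) < φ₂, and f(x) > f*. Define z_0 = x and z_{i+1} = 𝒜(z_i). Then there exists an index i ≤ ⌈log(2κ)/(1 − ρ)⌉ such that f(z_i) − f* ≤ (1/2)·(f(x) − f*). -/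
open Metric

/-- **Function-gap halving for a fallback algorithm** (Corollary 4.7): iterating an
algorithmic mapping halves the function gap within `⌈log(2κ)/(1-ρ)⌉` iterations. -/
theorem fallback_halves_gap {d : ℕ}
    (f : EuclideanSpace ℝ (Fin d) → ℝ) (Xs : Set (EuclideanSpace ℝ (Fin d)))
    (fstar : ℝ) (hXne : Xs.Nonempty) (hXcl : IsClosed Xs)
    (hfX : ∀ y ∈ Xs, f y = fstar)
    (xbar : EuclideanSpace ℝ (Fin d)) (hxbar : xbar ∈ Xs)
    (Alg : EuclideanSpace ℝ (Fin d) → EuclideanSpace ℝ (Fin d))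
    (φ₁ φ₂ ρ : ℝ) (hφ₂ : 0 < φ₂) (hφ : φ₂ ≤ φ₁) (hρ0 : 0 < ρ) (hρ1 : ρ < 1)
    (hAlg : ∀ x, ‖x - xbar‖ < φ₁ → infDist x Xs < φ₂ →
      ∀ xh ∈ Xs, dist x xh = infDist x Xs → ‖Alg x - xh‖ ≤ ρ * infDist x Xs)
    (μ L : ℝ) (hμ : 0 < μ) (hLμ : μ ≤ L)
    (hsharp : ∀ x ∈ ball xbar φ₁, f x - fstar ≥ μ * infDist x Xs)
    (hLip : ∀ a ∈ ball xbar (2 * φ₁), ∀ b ∈ ball xbar (2 * φ₁),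
      |f a - f b| ≤ L * ‖a - b‖)
    (x : EuclideanSpace ℝ (Fin d))
    (hx1 : ‖x - xbar‖ < (1 - ρ) * φ₁ / 2) (hx2 : infDist x Xs < φ₂)
    (hx3 : f x > fstar)
    (z : ℕ → EuclideanSpace ℝ (Fin d)) (hz0 : z 0 = x)
    (hz : ∀ i, z (i + 1) = Alg (z i)) :
    ∃ i : ℕ, i ≤ ⌈Real.log (2 * (L / μ)) / (1 - ρ)⌉₊ ∧
      f (z i) - fstar ≤ (f x - fstar) / 2 := by
  have hproj : ∀ y, ∃ p ∈ Xs, dist y p = infDist y Xs := fun y => by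
    obtain ⟨p, hp, h⟩ := hXcl.exists_infDist_eq_dist hXne y
    exact ⟨p, hp, h.symm⟩
  have hle : ∀ y, infDist y Xs ≤ ‖y - xbar‖ := fun y => by
    rw [← dist_eq_norm]; exact infDist_le_dist_of_mem hxbar
  have h1ρ : 0 < 1 - ρ := by linarith
  have hφ₁ : 0 < φ₁ := by linarith
  have hball : ∀ y, (1 - ρ) * ‖y - xbar‖ + (1 + ρ) * infDist y Xs < (1 - ρ) * φ₁ →
      ‖y - xbar‖ < φ₁ := fun y hy => by
    have h0 : 0 ≤ (1 + ρ) * infDist y Xs := mul_nonneg (by linarith) infDist_nonneg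
    exact lt_of_mul_lt_mul_left (by linarith) h1ρ.le
  have key : ∀ i : ℕ, (1 - ρ) * ‖z i - xbar‖ + (1 + ρ) * infDist (z i) Xs < (1 - ρ) * φ₁ ∧
      infDist (z i) Xs ≤ ρ ^ i * infDist x Xs ∧ infDist (z i) Xs < φ₂ := by
    intro i
    induction i with
    | zero =>
      rw [hz0]
      refine ⟨?_, by simp, hx2⟩
      have := mul_le_mul_of_nonneg_left (hle x) (by linarith : 0 ≤ 1 + ρ)
      linarith
    | succ i ih =>
      obtain ⟨h1, h2, h3⟩ := ih
      obtain ⟨p, hp, hpd⟩ := hproj (z i)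
      have hA := hAlg (z i) (hball _ h1) h3 p hp hpd
      rw [← hz i] at hA
      have h0 : 0 ≤ infDist (z i) Xs := infDist_nonneg
      have hd : infDist (z (i + 1)) Xs ≤ ρ * infDist (z i) Xs := by
        refine (infDist_le_dist_of_mem hp).trans ?_
        rw [dist_eq_norm]; exact hA
      have hn : ‖z (i + 1) - xbar‖ ≤ ρ * infDist (z i) Xs + infDist (z i) Xs
          + ‖z i - xbar‖ := by
        have t1 := dist_triangle (z (i + 1)) p xbar
        have t2 := dist_triangle p (z i) xbar
        rw [dist_comm p (z i), hpd] at t2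
        simp only [dist_eq_norm] at t1 t2
        linarith
      refine ⟨?_, ?_, ?_⟩
      · have e1 := mul_le_mul_of_nonneg_left hn h1ρ.le
        have e2 := mul_le_mul_of_nonneg_left hd (by linarith : 0 ≤ 1 + ρ)
        nlinarith
      · have := mul_le_mul_of_nonneg_left h2 hρ0.le
        rw [pow_succ]
        linarith
      · nlinarith
  refine ⟨_, le_rfl, ?_⟩
  set N := ⌈Real.log (2 * (L / μ)) / (1 - ρ)⌉₊ with hN
  obtain ⟨h1, h2, -⟩ := key N
  have hb := hball _ h1
  obtain ⟨p, hp, hpd⟩ := hproj (z N)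
  have hL : 0 < L := by linarith
  have hf : f (z N) - fstar ≤ L * infDist (z N) Xs := by
    have hpb : p ∈ ball xbar (2 * φ₁) := by
      rw [mem_ball]
      have t := dist_triangle p (z N) xbar
      rw [dist_comm p (z N), hpd, dist_eq_norm (z N)] at t
      have := hle (z N)
      linarith
    have hzb : z N ∈ ball xbar (2 * φ₁) := by
      rw [mem_ball, dist_eq_norm]; linarith
    have h := (le_abs_self _).trans (hLip _ hzb _ hpb)
    rwa [hfX p hp, ← dist_eq_norm, hpd] at h
  have hxb : x ∈ ball xbar φ₁ := by
    rw [mem_ball, dist_eq_norm]; nlinarith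
  have hs := hsharp x hxb
  have hκ : 0 < 2 * (L / μ) := by positivity
  have hpow : ρ ^ N * (2 * (L / μ)) ≤ 1 := by
    have hlog : Real.log (2 * (L / μ)) ≤ N * (1 - ρ) := by
      rw [← div_le_iff₀ h1ρ]; exact Nat.le_ceil _
    have a1 : ρ ≤ Real.exp (-(1 - ρ)) := by
      have := Real.add_one_le_exp (-(1 - ρ)); linarith
    have a2 : ρ ^ N ≤ Real.exp (-(N * (1 - ρ))) := by
      calc ρ ^ N ≤ Real.exp (-(1 - ρ)) ^ N := pow_le_pow_left₀ hρ0.le a1 N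
        _ = _ := by rw [← Real.exp_nat_mul]; ring_nf
    have a3 : 2 * (L / μ) ≤ Real.exp (N * (1 - ρ)) := (Real.log_le_iff_le_exp hκ).1 hlog
    calc ρ ^ N * (2 * (L / μ)) ≤ Real.exp (-(N * (1 - ρ))) * Real.exp (N * (1 - ρ)) :=
          mul_le_mul a2 a3 hκ.le (Real.exp_pos _).le
      _ = 1 := by rw [← Real.exp_add]; simp
  have hpow2 : ρ ^ N * (2 * L) ≤ μ := by
    have := mul_le_mul_of_nonneg_right hpow hμ.le
    have e : ρ ^ N * (2 * (L / μ)) * μ = ρ ^ N * (2 * L) := by field_simp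
    linarith
  have b1 := mul_le_mul_of_nonneg_left h2 hL.le
  have b2 := mul_le_mul_of_nonneg_right hpow2 (infDist_nonneg (x := x) (s := Xs))
  nlinarith
end

section
/- Chain rule for (b)-regularity (Theorem 3.4 of the paper): Let E₁, E₂, E₃ be finite-dimensional real inner-product spaces, let F₁ : E₁ → E₂ and F₂ : E₂ → E₃ be maps with F₁ Lipschitz on a neighborhood of x̄, and let G₁ : E₁ → Set (E₁ →L[ℝ] E₂) and G₂ : E₂ → Set (E₂ →L[ℝ] E₃) be set-valued maps such that the operator norms of the elements of G₂(z) are bounded above uniformly for z in a neighborhood of F₁(x̄). Fix Y₂ ⊆ E₂, set Y₁ = F₁⁻¹(Y₂), and let x̄ ∈ Y₁. Suppose (F₁, G₁) is (b)-regular along Y₁ at x̄ with exponent 1+η₁ and (F₂, G₂) is (b)-regular along Y₂ at F₁(x̄) with exponent 1+η₂. Define G(x) = {A₂ ∘ A₁ : A₁ ∈ G₁(x), A₂ ∈ G₂(F₁(x))}. Then (F₂ ∘ F₁, G) is (b)-regular along Y₁ at x̄ with exponent 1 + min{η₁, η₂}. -/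
open Metric

/-- `(F, G)` is `(b)`-regular along `Y` at `xbar` with exponent `1 + η`: there are
`C > 0` and `ε > 0` such that `‖F y - F x - A (y - x)‖ ≤ C ‖x - y‖^(1+η)` for all `x`
in the open ball `B_ε(xbar)`, all `A ∈ G x`, and all `y ∈ Y ∩ B_ε(xbar)`. -/
def BRegular {E E' : Type*} [NormedAddCommGroup E] [InnerProductSpace ℝ E]
    [NormedAddCommGroup E'] [InnerProductSpace ℝ E']
    (F : E → E') (G : E → Set (E →L[ℝ] E')) (Y : Set E) (xbar : E) (η : ℝ) : Prop :=
  ∃ C > (0 : ℝ), ∃ ε > (0 : ℝ), ∀ x ∈ ball xbar ε, ∀ A ∈ G x, ∀ y ∈ Y ∩ ball xbar ε,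
    ‖F y - F x - A (y - x)‖ ≤ C * ‖x - y‖ ^ (1 + η)

/-- **Chain rule for (b)-regularity** (Theorem 3.4). -/
theorem bregular_chain_rule
    {E₁ E₂ E₃ : Type*}
    [NormedAddCommGroup E₁] [InnerProductSpace ℝ E₁] [FiniteDimensional ℝ E₁]
    [NormedAddCommGroup E₂] [InnerProductSpace ℝ E₂] [FiniteDimensional ℝ E₂]
    [NormedAddCommGroup E₃] [InnerProductSpace ℝ E₃] [FiniteDimensional ℝ E₃]
    (F₁ : E₁ → E₂) (F₂ : E₂ → E₃)
    (G₁ : E₁ → Set (E₁ →L[ℝ] E₂)) (G₂ : E₂ → Set (E₂ →L[ℝ] E₃))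
    (Y₂ : Set E₂) (xbar : E₁) (hxbar : xbar ∈ F₁ ⁻¹' Y₂)
    (η₁ η₂ : ℝ) (hη₁ : 0 < η₁) (hη₂ : 0 < η₂)
    (hLip : ∃ ε > (0 : ℝ), ∃ K : NNReal, LipschitzOnWith K F₁ (ball xbar ε))
    (hbdd : ∃ ε > (0 : ℝ), ∃ M : ℝ, ∀ z ∈ ball (F₁ xbar) ε, ∀ A ∈ G₂ z, ‖A‖ ≤ M)
    (h₁ : BRegular F₁ G₁ (F₁ ⁻¹' Y₂) xbar η₁)
    (h₂ : BRegular F₂ G₂ Y₂ (F₁ xbar) η₂) :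
    BRegular (F₂ ∘ F₁)
      (fun x => {C : E₁ →L[ℝ] E₃ | ∃ A₁ ∈ G₁ x, ∃ A₂ ∈ G₂ (F₁ x), C = A₂.comp A₁})
      (F₁ ⁻¹' Y₂) xbar (min η₁ η₂) := by
  obtain ⟨e0, he0, K, hK⟩ := hLip
  obtain ⟨e3, he3, M, hM⟩ := hbdd
  obtain ⟨C1, hC1, e1, he1, H1⟩ := h₁
  obtain ⟨C2, hC2, e2, he2, H2⟩ := h₂
  have hK0 : (0 : ℝ) ≤ K := K.2
  have hK1 : (0 : ℝ) < K + 1 := by positivity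
  obtain ⟨r, hr, hr0, hr1, hr2, hr3, hrh⟩ : ∃ r > (0 : ℝ), r ≤ e0 ∧ r ≤ e1 ∧
      (K + 1) * r ≤ e2 ∧ (K + 1) * r ≤ e3 ∧ r ≤ 1 / 2 := by
    refine ⟨min (min e0 e1) (min (min (e2 / (K + 1)) (e3 / (K + 1))) (1 / 2)), by positivity,
      ?_, ?_, ?_, ?_, ?_⟩
    · exact (min_le_left _ _).trans (min_le_left _ _)
    · exact (min_le_left _ _).trans (min_le_right _ _)
    · rw [mul_comm, ← le_div_iff₀ hK1]
      exact (min_le_right _ _).trans ((min_le_left _ _).trans (min_le_left _ _))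
    · rw [mul_comm, ← le_div_iff₀ hK1]
      exact (min_le_right _ _).trans ((min_le_left _ _).trans (min_le_right _ _))
    · exact (min_le_right _ _).trans (min_le_right _ _)
  have key : ∀ x ∈ ball xbar r, dist (F₁ x) (F₁ xbar) < (K + 1) * r := by
    intro x hx
    have h := hK.dist_le_mul x (ball_subset_ball hr0 hx) xbar (mem_ball_self he0)
    rw [mem_ball] at hx
    have := dist_nonneg (x := x) (y := xbar)
    nlinarith
  refine ⟨C2 * (K : ℝ) ^ (1 + η₂) + |M| * C1 + 1, by positivity, r, hr, ?_⟩
  rintro x hx _ ⟨A₁, hA₁, A₂, hA₂, rfl⟩ y ⟨hyY, hy⟩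
  have b1 := H1 x (ball_subset_ball hr1 hx) A₁ hA₁ y ⟨hyY, ball_subset_ball hr1 hy⟩
  have b2 := H2 (F₁ x) (mem_ball.2 ((key x hx).trans_le hr2)) A₂ hA₂ (F₁ y)
    ⟨hyY, mem_ball.2 ((key y hy).trans_le hr2)⟩
  have b3 : ‖A₂‖ ≤ |M| :=
    (hM (F₁ x) (mem_ball.2 ((key x hx).trans_le hr3)) A₂ hA₂).trans (le_abs_self M)
  have b4 : ‖F₁ x - F₁ y‖ ≤ K * ‖x - y‖ := by
    simpa [dist_eq_norm] using
      hK.dist_le_mul x (ball_subset_ball hr0 hx) y (ball_subset_ball hr0 hy)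
  have ht0 := norm_nonneg (x - y)
  have ht1 : ‖x - y‖ ≤ 1 := by
    rw [← dist_eq_norm]
    have := dist_triangle_right x y xbar
    rw [mem_ball] at hx hy
    linarith
  have hmono : ∀ η : ℝ, min η₁ η₂ ≤ η → ‖x - y‖ ^ (1 + η) ≤ ‖x - y‖ ^ (1 + min η₁ η₂) := by
    intro η h
    have hm : 0 < min η₁ η₂ := lt_min hη₁ hη₂
    exact Real.rpow_le_rpow_of_exponent_ge_of_imp ht0 ht1 (by linarith)
      (fun _ h0 => absurd h0 (by linarith))
  have m1 := hmono η₁ (min_le_left _ _)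
  have m2 := hmono η₂ (min_le_right _ _)
  set T := ‖x - y‖ ^ (1 + min η₁ η₂) with hT
  have hT0 : 0 ≤ T := Real.rpow_nonneg ht0 _
  have c2 : ‖F₁ x - F₁ y‖ ^ (1 + η₂) ≤ (K : ℝ) ^ (1 + η₂) * T := by
    calc ‖F₁ x - F₁ y‖ ^ (1 + η₂) ≤ (K * ‖x - y‖) ^ (1 + η₂) :=
          Real.rpow_le_rpow (norm_nonneg _) b4 (by linarith)
      _ = (K : ℝ) ^ (1 + η₂) * ‖x - y‖ ^ (1 + η₂) := Real.mul_rpow hK0 ht0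
      _ ≤ _ := by gcongr
  have split : (F₂ ∘ F₁) y - (F₂ ∘ F₁) x - (A₂.comp A₁) (y - x)
      = (F₂ (F₁ y) - F₂ (F₁ x) - A₂ (F₁ y - F₁ x)) + A₂ (F₁ y - F₁ x - A₁ (y - x)) := by
    simp only [Function.comp, ContinuousLinearMap.comp_apply, map_sub]
    abel
  rw [split]
  calc _ ≤ ‖F₂ (F₁ y) - F₂ (F₁ x) - A₂ (F₁ y - F₁ x)‖ + ‖A₂ (F₁ y - F₁ x - A₁ (y - x))‖ :=
        norm_add_le _ _
    _ ≤ C2 * ((K : ℝ) ^ (1 + η₂) * T) + |M| * (C1 * T) := by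
        refine add_le_add (b2.trans (by gcongr)) ((A₂.le_opNorm _).trans ?_)
        have : ‖F₁ y - F₁ x - A₁ (y - x)‖ ≤ C1 * T := b1.trans (by gcongr)
        gcongr
    _ ≤ _ := by nlinarith
end

section
/- Sum rule for (b)-regularity (Corollary 3.5 of the paper): Let E and E' be finite-dimensional real inner-product spaces and let I be a finite index set. For each i ∈ I let F_i : E → E' be a map, G_i : E → Set (E →L[ℝ] E') a set-valued map, Y_i ⊆ E a set, and η_i > 0, and suppose x̄ ∈ Y := ⋂_{i∈I} Y_i and each (F_i, G_i) is (b)-regular along Y_i at x̄ with exponent 1+η_i. Define F = ∑_{i∈I} F_i and G(x) = {∑_{i∈I} A_i : A_i ∈ G_i(x) for each i ∈ I}. Then (F, G) is (b)-regular along Y at x̄ with exponent 1 + min_{i∈I} η_i. -/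
open Metric

/-- **Sum rule for (b)-regularity** (Corollary 3.5). -/
theorem bregular_sum_rule
    {E E' : Type*}
    [NormedAddCommGroup E] [InnerProductSpace ℝ E] [FiniteDimensional ℝ E]
    [NormedAddCommGroup E'] [InnerProductSpace ℝ E'] [FiniteDimensional ℝ E']
    {I : Type*} [Fintype I] [Nonempty I]
    (F : I → E → E') (G : I → E → Set (E →L[ℝ] E')) (Y : I → Set E)
    (η : I → ℝ) (hη : ∀ i, 0 < η i)
    (xbar : E) (hxbar : xbar ∈ ⋂ i, Y i)
    (h : ∀ i, BRegular (F i) (G i) (Y i) xbar (η i)) :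
    BRegular (fun x => ∑ i, F i x)
      (fun x => {A : E →L[ℝ] E' |
        ∃ a : I → (E →L[ℝ] E'), (∀ i, a i ∈ G i x) ∧ A = ∑ i, a i})
      (⋂ i, Y i) xbar (⨅ i, η i) := by
  have hbdd : BddBelow (Set.range η) := (Set.finite_range η).bddBelow
  have hinf : 0 ≤ ⨅ i, η i := Real.iInf_nonneg fun i => (hη i).le
  choose C hC ε hε hreg using h
  have hε' : 0 < Finset.univ.inf' Finset.univ_nonempty ε := by
    rw [Finset.lt_inf'_iff]
    exact fun i _ => hε i
  refine ⟨∑ i, C i, Finset.sum_pos (fun i _ => hC i) Finset.univ_nonempty,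
    min (Finset.univ.inf' Finset.univ_nonempty ε) (1 / 2), lt_min hε' (by norm_num), ?_⟩
  rintro x hx A ⟨a, ha, rfl⟩ y ⟨hyY, hy⟩
  rw [Metric.mem_ball, lt_min_iff] at hx hy
  have hle : ‖x - y‖ ≤ 1 := by
    rw [← dist_eq_norm]
    have := dist_triangle_right x y xbar
    linarith [hx.2, hy.2]
  have hεi : ∀ i, Finset.univ.inf' Finset.univ_nonempty ε ≤ ε i :=
    fun i => Finset.inf'_le _ (Finset.mem_univ i)
  have heq : (∑ i, F i y) - (∑ i, F i x) - (∑ i, a i) (y - x)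
      = ∑ i, (F i y - F i x - a i (y - x)) := by
    rw [Finset.sum_sub_distrib, Finset.sum_sub_distrib, ContinuousLinearMap.sum_apply]
  show ‖(∑ i, F i y) - (∑ i, F i x) - (∑ i, a i) (y - x)‖ ≤ _
  rw [heq, Finset.sum_mul]
  refine norm_sum_le_of_le _ fun i _ => ?_
  have h1 := hreg i x (Metric.mem_ball.2 (hx.1.trans_le (hεi i))) (a i) (ha i) y
    ⟨Set.mem_iInter.1 hyY i, Metric.mem_ball.2 (hy.1.trans_le (hεi i))⟩
  refine h1.trans (mul_le_mul_of_nonneg_left ?_ (hC i).le)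
  have h2 : ⨅ i, η i ≤ η i := ciInf_le hbdd i
  exact Real.rpow_le_rpow_of_exponent_ge_of_imp (norm_nonneg _) hle (by linarith)
    (fun _ h0 => by linarith)
end

section
/- (b)-regularity of the distance function from a proximal-normal estimate (the key step in the proof of Lemma 3.3 of the paper): Let E be a finite-dimensional real inner-product space, X ⊆ E a closed set, Y ⊆ X, x̄ ∈ Y, and let C > 0, 0 < η ≤ 1, and δ > 0 be such that |⟨z − ẑ, y − ẑ⟩| ≤ C·‖z − ẑ‖·‖y − ẑ‖^(1+η) for every z in the open ball B_δ(x̄) with z ∉ X, every nearest point ẑ of X to z, and every y ∈ Y ∩ B_δ(x̄). Then for every such z, ẑ, and y, writing v_z = (z − ẑ)/‖z − ẑ‖, one has |dist(z, X) + ⟨v_z, y − z⟩| ≤ 4C·‖y − z‖^(1+η). -/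
open Metric
open scoped RealInnerProductSpace

/-- **(b)-regularity of the distance function from a proximal-normal estimate**
(key step in the proof of Lemma 3.3). -/
theorem bregular_distance_function
    {E : Type*} [NormedAddCommGroup E] [InnerProductSpace ℝ E] [FiniteDimensional ℝ E]
    (X Y : Set E) (hXcl : IsClosed X) (hYX : Y ⊆ X) (xbar : E) (hxbar : xbar ∈ Y)
    (C η δ : ℝ) (hC : 0 < C) (hη0 : 0 < η) (hη1 : η ≤ 1) (hδ : 0 < δ)
    (hkey : ∀ z ∈ ball xbar δ, z ∉ X → ∀ zh ∈ X, dist z zh = infDist z X →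
      ∀ y ∈ Y ∩ ball xbar δ, |⟪z - zh, y - zh⟫| ≤ C * ‖z - zh‖ * ‖y - zh‖ ^ (1 + η)) :
    ∀ z ∈ ball xbar δ, z ∉ X → ∀ zh ∈ X, dist z zh = infDist z X →
      ∀ y ∈ Y ∩ ball xbar δ,
        |infDist z X + ⟪‖z - zh‖⁻¹ • (z - zh), y - z⟫| ≤ 4 * C * ‖y - z‖ ^ (1 + η) := by
  intro z hz hzX zh hzh hd y hy
  have h := hkey z hz hzX zh hzh hd y hy
  have hne : z - zh ≠ 0 := by
    intro h0
    exact hzX (by rw [sub_eq_zero.mp h0]; exact hzh)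
  have hpos : 0 < ‖z - zh‖ := norm_pos_iff.mpr hne
  have hdn : infDist z X = ‖z - zh‖ := by rw [← hd, dist_eq_norm]
  have hle : ‖z - zh‖ ≤ ‖y - z‖ := by
    rw [← hdn, ← dist_eq_norm, dist_comm]
    exact infDist_le_dist_of_mem (hYX hy.1)
  have htri : ‖y - zh‖ ≤ 2 * ‖y - z‖ := by
    have h1 := norm_add_le (y - z) (z - zh)
    rw [sub_add_sub_cancel] at h1
    linarith
  have heq : infDist z X + ⟪‖z - zh‖⁻¹ • (z - zh), y - z⟫
      = ‖z - zh‖⁻¹ * ⟪z - zh, y - zh⟫ := by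
    have h2 : y - zh = (y - z) + (z - zh) := by abel
    rw [hdn, h2, inner_add_right, real_inner_self_eq_norm_sq, real_inner_smul_left]
    field_simp
    ring
  have hpow : ‖y - zh‖ ^ (1 + η) ≤ 4 * ‖y - z‖ ^ (1 + η) := by
    calc ‖y - zh‖ ^ (1 + η) ≤ (2 * ‖y - z‖) ^ (1 + η) :=
          Real.rpow_le_rpow (norm_nonneg _) htri (by linarith)
      _ = 2 ^ (1 + η) * ‖y - z‖ ^ (1 + η) :=
          Real.mul_rpow (by norm_num) (norm_nonneg _)
      _ ≤ 4 * ‖y - z‖ ^ (1 + η) := by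
          apply mul_le_mul_of_nonneg_right _ (Real.rpow_nonneg (norm_nonneg _) _)
          calc (2 : ℝ) ^ (1 + η) ≤ 2 ^ (2 : ℝ) :=
                Real.rpow_le_rpow_of_exponent_le (by norm_num) (by linarith)
            _ = 4 := by norm_num
  rw [heq, abs_mul, abs_of_pos (inv_pos.mpr hpos)]
  calc ‖z - zh‖⁻¹ * |⟪z - zh, y - zh⟫|
      ≤ ‖z - zh‖⁻¹ * (C * ‖z - zh‖ * ‖y - zh‖ ^ (1 + η)) :=
        mul_le_mul_of_nonneg_left h (inv_pos.mpr hpos).le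
    _ = C * ‖y - zh‖ ^ (1 + η) := by field_simp
    _ ≤ C * (4 * ‖y - z‖ ^ (1 + η)) := mul_le_mul_of_nonneg_left hpow hC.le
    _ = 4 * C * ‖y - z‖ ^ (1 + η) := by ring
end
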